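/- Boolean algebra theorem for the graph semantics: for every valuation frame M of the second ('graph') semantics, the valuation of formulas in unit graph expansion, with conjunction interpreted as min, disjunction as max, and complement given by recursiveReduce2, satisfies all Boolean algebra laws; in particular, for all formulas F, F₁, F₂ in unit graph expansion: associativity, commutativity and distributivity of min and max of the values [M ⊨ Fᵢ], idempotence ([M ⊨ F ∧ F] = [M ⊨ F ∨ F] = [M ⊨ F]), absorption ([M ⊨ F₁ ∧ (F₁ ∨ F₂)] = [M ⊨ F₁ ∨ (F₁ ∧ F₂)] = [M ⊨ F₁]), complementation (max([M ⊨ F], [M ⊨ recursiveReduce2(F)]) = 1 and min([M ⊨ F], [M ⊨ recursiveReduce2(F)]) = 0), and double negation ([M ⊨ recursiveReduce2(recursiveReduce2(F))] = [M ⊨ F]). -/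

import Mathlib

/-!
The lattice laws hold for `min` and `max` on `ℕ`; the content is in the complement.

The value of a formula is extended to arbitrary contexts `ts` (`ctxVal`): a chain `H ⋗ T` has in
context `ts` the minimum of the value of `H` in `ts` and the value of `T` in the context `ts`
extended by `⟨map H⟩`. For this context-indexed value distribution of `H ⋗ -` over `∧` and `∨`
changes nothing (`ctxVal_dist2`), so an induction on a formula of the shape below, for all
contexts at once, gives `ctxVal ts (rr2 c F) = 1 - ctxVal ts F` (`ctxVal_rr2`).

The frame conditions on `J` say that `val` is `ctxVal` in the empty context as long as the chains
are built from literals by `∧` and `⋗` only (`Expanded`, `val_eq_ctxVal`). Formulas in unit graph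
expansion have this shape, and `rr2` preserves it, so complementation follows, and applying it
twice gives double negation.
-/

namespace GraphGradual

/-- Formulas of the second ('graph') gradual logic: F ::= a | F ∧ F | F ∨ F | ¬F | F ⋗ F. -/
inductive GGF (A : Type) : Type
  | lit : A → GGF A
  | conj : GGF A → GGF A → GGF A
  | disj : GGF A → GGF A → GGF A
  | neg  : GGF A → GGF A
  | obat : GGF A → GGF A → GGF A

/-- Unit chains of literals a₀ ⋗ a₁ ⋗ ⋯ ⋗ a_k (right-associated). -/
inductive LitChain {A : Type} : GGF A → Prop
  | base (a b : A) : LitChain (GGF.obat (GGF.lit a) (GGF.lit b))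
  | cons (a : A) {F : GGF A} : LitChain F → LitChain (GGF.obat (GGF.lit a) F)

mutual
  /-- Unit graph chains. -/
  inductive UGC {A : Type} : GGF A → Prop
    | ofLitChain {F : GGF A} : LitChain F → UGC F
    | snoc {G : GGF A} (a : A) : UGC G → UGC (GGF.obat G (GGF.lit a))
    | conj {G₁ G₂ : GGF A} (a : A) :
        LitOrUGC G₁ → LitOrUGC G₂ → UGC (GGF.obat (GGF.conj G₁ G₂) (GGF.lit a))
  /-- Formulas that are a literal or a unit graph chain. -/
  inductive LitOrUGC {A : Type} : GGF A → Prop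
    | lit (a : A) : LitOrUGC (GGF.lit a)
    | chain {F : GGF A} : UGC F → LitOrUGC F
end

/-- Unit graph expansion: built from literals and unit graph chains using only ∧ and ∨. -/
inductive UGE {A : Type} : GGF A → Prop
  | lit (a : A) : UGE (GGF.lit a)
  | chain {F : GGF A} : UGC F → UGE F
  | conj {F G : GGF A} : UGE F → UGE G → UGE (GGF.conj F G)
  | disj {F G : GGF A} : UGE F → UGE G → UGE (GGF.disj F G)

/-- `AndOf l F`: F is some ∧-association of the (nonempty) list l of formulas. -/
inductive AndOf {A : Type} : List (GGF A) → GGF A → Prop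
  | single (F : GGF A) : AndOf [F] F
  | node {l₁ l₂ : List (GGF A)} {F₁ F₂ : GGF A} :
      AndOf l₁ F₁ → AndOf l₂ F₂ → AndOf (l₁ ++ l₂) (GGF.conj F₁ F₂)

/-- `OrOf l F`: F is some ∨-association of the (nonempty) list l of formulas. -/
inductive OrOf {A : Type} : List (GGF A) → GGF A → Prop
  | single (F : GGF A) : OrOf [F] F
  | node {l₁ l₂ : List (GGF A)} {F₁ F₂ : GGF A} :
      OrOf l₁ F₁ → OrOf l₂ F₂ → OrOf (l₁ ++ l₂) (GGF.disj F₁ F₂)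

/-- Right-nested conjunction F ∧ (G₀ ∧ (G₁ ∧ ⋯)). -/
def bigAnd {A : Type} : GGF A → List (GGF A) → GGF A
  | F, [] => F
  | F, G :: l => GGF.conj F (bigAnd G l)

/-- Right-nested disjunction F ∨ (G₀ ∨ (G₁ ∨ ⋯)). -/
def bigOr {A : Type} : GGF A → List (GGF A) → GGF A
  | F, [] => F
  | F, G :: l => GGF.disj F (bigOr G l)

/-- `(⋀ m) ⋗ F` for a nonempty list m (default F on the empty list, never used). -/
def mkConj {A : Type} (F : GGF A) : List (GGF A) → GGF A
  | [] => F
  | G :: l => GGF.obat (bigAnd G l) F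

/-- Disjunction of a nonempty list (default d on the empty list, never used). -/
def bigOrList {A : Type} (d : GGF A) : List (GGF A) → GGF A
  | [] => d
  | G :: l => bigOr G l

/-- One-step reduction of the graph gradual logic. -/
inductive GStep {A : Type} (c : A → A) : GGF A → GGF A → Prop
  | neg1 (a : A) : GStep c (GGF.neg (GGF.lit a)) (GGF.lit (c a))
  | neg2 (F₁ F₂ : GGF A) :
      GStep c (GGF.neg (GGF.conj F₁ F₂)) (GGF.disj (GGF.neg F₁) (GGF.neg F₂))
  | neg3 (F₁ F₂ : GGF A) :
      GStep c (GGF.neg (GGF.disj F₁ F₂)) (GGF.conj (GGF.neg F₁) (GGF.neg F₂))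
  | neg4 {G : GGF A} {l : List (GGF A)} {H : GGF A} (F₂ : GGF A)
      (hl : ∀ X ∈ (G :: l), LitOrUGC X) (hH : AndOf (G :: l) H) :
      GStep c (GGF.neg (GGF.obat H F₂))
        (bigOr (GGF.neg G) (l.map GGF.neg ++ [GGF.obat H (GGF.neg F₂)]))
  | ob3 {l : List (GGF A)} {L : GGF A} (F : GGF A)
      (hlen : 2 ≤ l.length) (hl : ∀ X ∈ l, LitOrUGC X) (hL : OrOf l L) :
      GStep c (GGF.obat L F)
        (bigOrList F ((l.sublists.filter (fun m => !m.isEmpty)).map (mkConj F)))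
  | ob4 (F₁ F₂ F₃ : GGF A) :
      GStep c (GGF.obat F₁ (GGF.conj F₂ F₃)) (GGF.conj (GGF.obat F₁ F₂) (GGF.obat F₁ F₃))
  | ob5 (F₁ F₂ F₃ : GGF A) :
      GStep c (GGF.obat F₁ (GGF.disj F₂ F₃)) (GGF.disj (GGF.obat F₁ F₂) (GGF.obat F₁ F₃))
  | objD1 (F₁ F₂ F₃ F₄ : GGF A) :
      GStep c (GGF.obat (GGF.conj F₁ (GGF.disj F₂ F₃)) F₄)
        (GGF.obat (GGF.disj (GGF.conj F₁ F₂) (GGF.conj F₁ F₃)) F₄)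
  | objD2 (F₁ F₂ F₃ F₄ : GGF A) :
      GStep c (GGF.obat (GGF.conj (GGF.disj F₁ F₂) F₃) F₄)
        (GGF.obat (GGF.disj (GGF.conj F₁ F₃) (GGF.conj F₂ F₃)) F₄)
  | conj_left {F F' : GGF A} (G : GGF A) :
      GStep c F F' → GStep c (GGF.conj F G) (GGF.conj F' G)
  | conj_right (F : GGF A) {G G' : GGF A} :
      GStep c G G' → GStep c (GGF.conj F G) (GGF.conj F G')
  | disj_left {F F' : GGF A} (G : GGF A) :
      GStep c F F' → GStep c (GGF.disj F G) (GGF.disj F' G)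
  | disj_right (F : GGF A) {G G' : GGF A} :
      GStep c G G' → GStep c (GGF.disj F G) (GGF.disj F G')
  | neg_congr {F F' : GGF A} :
      GStep c F F' → GStep c (GGF.neg F) (GGF.neg F')
  | obat_left {F F' : GGF A} (G : GGF A) :
      GStep c F F' → GStep c (GGF.obat F G) (GGF.obat F' G)
  | obat_right (F : GGF A) {G G' : GGF A} :
      GStep c G G' → GStep c (GGF.obat F G) (GGF.obat F G')

/-- `GReduces c F G`: F ↦* G in finitely many (possibly zero) steps. -/
def GReduces {A : Type} (c : A → A) : GGF A → GGF A → Prop :=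
  Relation.ReflTransGen (GStep c)

/-- Distribute `H ⋗ -` over the ∧/∨-structure of a formula (⋗-reductions 4 and 5). -/
def dist2 {A : Type} (H : GGF A) : GGF A → GGF A
  | GGF.conj F G => GGF.conj (dist2 H F) (dist2 H G)
  | GGF.disj F G => GGF.disj (dist2 H F) (dist2 H G)
  | F => GGF.obat H F

/-- recursiveReduce2 on formulas in unit graph expansion: swap ∧/∨ outside chains,
complement the non-chain literals, replace each maximal chain with head H and tail T
by recursiveReduce2 H ∨ (H ⋗ recursiveReduce2 T), reduced into unit graph expansion
via ⋗-reductions 4 and 5. -/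
def rr2 {A : Type} (c : A → A) : GGF A → GGF A
  | GGF.lit a => GGF.lit (c a)
  | GGF.conj F G => GGF.disj (rr2 c F) (rr2 c G)
  | GGF.disj F G => GGF.conj (rr2 c F) (rr2 c G)
  | GGF.obat H T => GGF.disj (rr2 c H) (dist2 H (rr2 c T))
  | GGF.neg F => GGF.neg F

/-- Terms 𝒯 of the graph semantics: {a}, ⟨a⟩, {t}, ⟨t⟩, {t₁,t₂}, ⟨t₁⟩.⟨t₂⟩. -/
inductive GT (A : Type) : Type
  | atom : A → GT A
  | brace : GT A → GT A
  | pair : GT A → GT A → GT A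
  | ang : GT A → GT A
  | seq : GT A → GT A → GT A

/-- The congruence ≐ on terms: braces unordered and idempotent, {{t}} ≐ {t},
⟨⟨t⟩⟩ ≐ ⟨t⟩, closed under all term constructors. -/
inductive GT.Eqv {A : Type} : GT A → GT A → Prop
  | refl (t : GT A) : GT.Eqv t t
  | symm {t u : GT A} : GT.Eqv t u → GT.Eqv u t
  | trans {t u v : GT A} : GT.Eqv t u → GT.Eqv u v → GT.Eqv t v
  | brace_brace (t : GT A) : GT.Eqv (GT.brace (GT.brace t)) (GT.brace t)
  | ang_ang (t : GT A) : GT.Eqv (GT.ang (GT.ang t)) (GT.ang t)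
  | pair_comm (t u : GT A) : GT.Eqv (GT.pair t u) (GT.pair u t)
  | pair_idem (t : GT A) : GT.Eqv (GT.pair t t) (GT.brace t)
  | brace_congr {t u : GT A} : GT.Eqv t u → GT.Eqv (GT.brace t) (GT.brace u)
  | ang_congr {t u : GT A} : GT.Eqv t u → GT.Eqv (GT.ang t) (GT.ang u)
  | pair_congr {t t' u u' : GT A} :
      GT.Eqv t t' → GT.Eqv u u' → GT.Eqv (GT.pair t u) (GT.pair t' u')
  | seq_congr {t t' u u' : GT A} :
      GT.Eqv t t' → GT.Eqv u u' → GT.Eqv (GT.seq t u) (GT.seq t' u')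

/-- map: map(a) = ⟨a⟩ (in compressed form, the bare atom), map(G₀ ∧ G₁) = {map G₀, map G₁},
map(G₀ ⋗ G₁) = ⟨map G₀⟩.⟨map G₁⟩.  (Junk on ∨ and ¬, never used.) -/
def gmap {A : Type} : GGF A → GT A
  | GGF.lit a => GT.atom a
  | GGF.conj F G => GT.pair (gmap F) (gmap G)
  | GGF.obat F G => GT.seq (gmap F) (gmap G)
  | GGF.disj F G => GT.pair (gmap F) (gmap G)
  | GGF.neg F => GT.brace (gmap F)

/-- A valuation frame of the graph semantics: a local interpretation I on contexts
from 𝒯* and a global interpretation J on nonempty sequences over 𝒯, subject to the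
conditions of Definition 15 (J of a sequence term is the conjunction of the global
values of its prefixes, braces split conjunctively, J(t*.a) = I(t*,a), and J is
invariant under the congruence ≐). -/
structure GFrame (A : Type) (c : A → A) where
  I : List (GT A) → A → ℕ
  I01 : ∀ ts a, I ts a = 0 ∨ I ts a = 1
  Icompl : ∀ ts a, I ts (c a) = 1 - I ts a
  J : List (GT A) → ℕ
  J01 : ∀ l, J l = 0 ∨ J l = 1
  Jatom : ∀ ts a, J (ts ++ [GT.atom a]) = I ts a
  Jbrace : ∀ ts t, J (ts ++ [GT.brace t]) = J (ts ++ [t])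
  Jpair : ∀ ts t u, J (ts ++ [GT.pair t u]) = min (J (ts ++ [t])) (J (ts ++ [u]))
  Jseq : ∀ ts t u, J (ts ++ [GT.seq t u]) = min (J (ts ++ [t])) (J (ts ++ [GT.ang t, u]))
  Jcong : ∀ (l l' : List (GT A)), List.Forall₂ GT.Eqv l l' → J l = J l'

/-- `[M ⊨ F]` for F in unit graph expansion: a literal or unit graph chain G gets
J(compress(map G)); ∧ is min and ∨ is max. -/
def GFrame.val {A : Type} {c : A → A} (M : GFrame A c) : GGF A → ℕ
  | GGF.lit a => M.I [] a
  | GGF.conj F G => min (M.val F) (M.val G)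
  | GGF.disj F G => max (M.val F) (M.val G)
  | GGF.neg _ => 0
  | GGF.obat F G => M.J [gmap (GGF.obat F G)]

/-- The shape pairs of the bisimulation theorem for the graph logic. -/
inductive ShapePair2 {A : Type} (c : A → A) : GGF A → GGF A → Prop
  | sp1 {l : List (GGF A)} {L : GGF A} (Fc : GGF A)
      (hlen : 2 ≤ l.length) (hl : ∀ X ∈ l, LitOrUGC X) (hL : OrOf l L) :
      ShapePair2 c (GGF.obat L Fc)
        (bigOrList Fc ((l.sublists.filter (fun m => !m.isEmpty)).map (mkConj Fc)))
  | sp2 (Fa Fb Fc : GGF A) :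
      ShapePair2 c (GGF.obat Fa (GGF.conj Fb Fc)) (GGF.conj (GGF.obat Fa Fb) (GGF.obat Fa Fc))
  | sp3 (Fa Fb Fc : GGF A) :
      ShapePair2 c (GGF.obat Fa (GGF.disj Fb Fc)) (GGF.disj (GGF.obat Fa Fb) (GGF.obat Fa Fc))
  | sp4 (Fa Fb Fc Fd : GGF A) :
      ShapePair2 c (GGF.obat (GGF.conj Fa (GGF.disj Fb Fc)) Fd)
        (GGF.obat (GGF.disj (GGF.conj Fa Fb) (GGF.conj Fa Fc)) Fd)
  | sp5 (Fa Fb Fc Fd : GGF A) :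
      ShapePair2 c (GGF.obat (GGF.conj (GGF.disj Fa Fb) Fc) Fd)
        (GGF.obat (GGF.disj (GGF.conj Fa Fc) (GGF.conj Fb Fc)) Fd)
  | sp6 {G : GGF A} (hG : LitOrUGC G) :
      ShapePair2 c (GGF.neg G) (rr2 c G)
  | sp7 (Fa Fb : GGF A) :
      ShapePair2 c (GGF.neg (GGF.conj Fa Fb)) (GGF.disj (GGF.neg Fa) (GGF.neg Fb))
  | sp8 (Fa Fb : GGF A) :
      ShapePair2 c (GGF.neg (GGF.disj Fa Fb)) (GGF.conj (GGF.neg Fa) (GGF.neg Fb))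
  | sp9 {G : GGF A} {l : List (GGF A)} {H : GGF A} (Fa : GGF A)
      (hl : ∀ X ∈ (G :: l), LitOrUGC X) (hH : AndOf (G :: l) H) :
      ShapePair2 c (GGF.neg (GGF.obat H Fa))
        (bigOr (GGF.neg G) (l.map GGF.neg ++ [GGF.obat H (GGF.neg Fa)]))
  | sp10 (Fa : GGF A) : ShapePair2 c (GGF.disj Fa Fa) Fa
  | sp11 (Fa : GGF A) : ShapePair2 c (GGF.conj Fa Fa) Fa
  | sp12 (Fa Fb : GGF A) : ShapePair2 c (GGF.disj Fa Fb) (GGF.disj Fb Fa)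
  | sp13 (Fa Fb Fc : GGF A) :
      ShapePair2 c (GGF.disj Fa (GGF.disj Fb Fc)) (GGF.disj (GGF.disj Fa Fb) Fc)
  | sp14 (Fa Fb : GGF A) : ShapePair2 c (GGF.conj Fa Fb) (GGF.conj Fb Fa)
  | sp15 (Fa Fb Fc : GGF A) :
      ShapePair2 c (GGF.conj Fa (GGF.conj Fb Fc)) (GGF.conj (GGF.conj Fa Fb) Fc)

/-- `ReplaceAt2 R F F'`: F' is obtained from F by replacing one occurrence of a
subformula related by R (in either direction). -/
inductive ReplaceAt2 {A : Type} (R : GGF A → GGF A → Prop) : GGF A → GGF A → Prop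
  | here {F F' : GGF A} : R F F' → ReplaceAt2 R F F'
  | here_rev {F F' : GGF A} : R F' F → ReplaceAt2 R F F'
  | conj_left {F F' : GGF A} (G : GGF A) :
      ReplaceAt2 R F F' → ReplaceAt2 R (GGF.conj F G) (GGF.conj F' G)
  | conj_right (F : GGF A) {G G' : GGF A} :
      ReplaceAt2 R G G' → ReplaceAt2 R (GGF.conj F G) (GGF.conj F G')
  | disj_left {F F' : GGF A} (G : GGF A) :
      ReplaceAt2 R F F' → ReplaceAt2 R (GGF.disj F G) (GGF.disj F' G)
  | disj_right (F : GGF A) {G G' : GGF A} :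
      ReplaceAt2 R G G' → ReplaceAt2 R (GGF.disj F G) (GGF.disj F G')
  | neg_congr {F F' : GGF A} :
      ReplaceAt2 R F F' → ReplaceAt2 R (GGF.neg F) (GGF.neg F')
  | obat_left {F F' : GGF A} (G : GGF A) :
      ReplaceAt2 R F F' → ReplaceAt2 R (GGF.obat F G) (GGF.obat F' G)
  | obat_right (F : GGF A) {G G' : GGF A} :
      ReplaceAt2 R G G' → ReplaceAt2 R (GGF.obat F G) (GGF.obat F G')

/-- Formulas built from literals by `∧` and `⋗` only, i.e. those on which `gmap` is not junk. -/
def ChainLike {A : Type} : GGF A → Prop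
  | GGF.lit _ => True
  | GGF.conj F G => ChainLike F ∧ ChainLike G
  | GGF.disj _ _ => False
  | GGF.neg _ => False
  | GGF.obat F G => ChainLike F ∧ ChainLike G

/-- `∧`/`∨`-combinations of literals and of chains `H ⋗ T` with `H` and `T` both `ChainLike`. This
contains unit graph expansion and, unlike it, is closed under `rr2` by a direct induction. -/
def Expanded {A : Type} : GGF A → Prop
  | GGF.lit _ => True
  | GGF.conj F G => Expanded F ∧ Expanded G
  | GGF.disj F G => Expanded F ∧ Expanded G
  | GGF.neg _ => False
  | GGF.obat F G => ChainLike F ∧ ChainLike G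

theorem ChainLike.expanded {A : Type} {F : GGF A} (h : ChainLike F) : Expanded F := by
  induction F with
  | lit a => trivial
  | conj F G ihF ihG => exact ⟨ihF h.1, ihG h.2⟩
  | disj F G _ _ => exact h.elim
  | neg F _ => exact h.elim
  | obat F G _ _ => exact h

theorem LitChain.chainLike {A : Type} {F : GGF A} (h : LitChain F) : ChainLike F := by
  induction h with
  | base a b => exact ⟨trivial, trivial⟩
  | cons a _ ih => exact ⟨trivial, ih⟩

mutual
  theorem UGC.chainLike {A : Type} {F : GGF A} : UGC F → ChainLike F
    | .ofLitChain h => h.chainLike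
    | .snoc _ h => ⟨UGC.chainLike h, trivial⟩
    | .conj _ h₁ h₂ => ⟨⟨LitOrUGC.chainLike h₁, LitOrUGC.chainLike h₂⟩, trivial⟩
  theorem LitOrUGC.chainLike {A : Type} {F : GGF A} : LitOrUGC F → ChainLike F
    | .lit _ => trivial
    | .chain h => UGC.chainLike h
end

theorem UGE.expanded {A : Type} {F : GGF A} (h : UGE F) : Expanded F := by
  induction h with
  | lit a => trivial
  | chain h => exact h.chainLike.expanded
  | conj _ _ ih₁ ih₂ => exact ⟨ih₁, ih₂⟩
  | disj _ _ ih₁ ih₂ => exact ⟨ih₁, ih₂⟩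

theorem Expanded.dist2 {A : Type} {H X : GGF A} (hH : ChainLike H) (hX : Expanded X) :
    Expanded (dist2 H X) := by
  induction X with
  | lit a => exact ⟨hH, trivial⟩
  | conj F G ihF ihG => exact ⟨ihF hX.1, ihG hX.2⟩
  | disj F G ihF ihG => exact ⟨ihF hX.1, ihG hX.2⟩
  | neg F _ => exact hX.elim
  | obat F G _ _ => exact ⟨hH, hX⟩

theorem Expanded.rr2 {A : Type} (c : A → A) {F : GGF A} (h : Expanded F) :
    Expanded (rr2 c F) := by
  induction F with
  | lit a => trivial
  | conj F G ihF ihG => exact ⟨ihF h.1, ihG h.2⟩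
  | disj F G ihF ihG => exact ⟨ihF h.1, ihG h.2⟩
  | neg F _ => exact h.elim
  | obat F G ihF ihG => exact ⟨ihF h.1.expanded, Expanded.dist2 h.1 (ihG h.2.expanded)⟩

/-- The value of a formula in a context `ts`: the tail of a chain is evaluated in the context
extended by the head. Negation gets the same junk value `0` as in `GFrame.val`. -/
def GFrame.ctxVal {A : Type} {c : A → A} (M : GFrame A c) : List (GT A) → GGF A → ℕ
  | ts, GGF.lit a => M.I ts a
  | ts, GGF.conj F G => min (M.ctxVal ts F) (M.ctxVal ts G)
  | ts, GGF.disj F G => max (M.ctxVal ts F) (M.ctxVal ts G)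
  | _, GGF.neg _ => 0
  | ts, GGF.obat F G => min (M.ctxVal ts F) (M.ctxVal (ts ++ [GT.ang (gmap F)]) G)

theorem GFrame.ctxVal_le_one {A : Type} {c : A → A} (M : GFrame A c) (F : GGF A) :
    ∀ ts, M.ctxVal ts F ≤ 1 := by
  induction F with
  | lit a =>
    intro ts
    have := M.I01 ts a
    simp only [GFrame.ctxVal]
    omega
  | conj F G ihF _ => exact fun ts => (min_le_left _ _).trans (ihF ts)
  | disj F G ihF ihG => exact fun ts => max_le (ihF ts) (ihG ts)
  | neg F _ => exact fun _ => Nat.zero_le 1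
  | obat F G ihF _ => exact fun ts => (min_le_left _ _).trans (ihF ts)

/-- The frame conditions on `J`, read as a recursive computation of `J (ts ++ [gmap F])`. -/
theorem GFrame.J_gmap {A : Type} {c : A → A} (M : GFrame A c) {F : GGF A} (h : ChainLike F) :
    ∀ ts, M.J (ts ++ [gmap F]) = M.ctxVal ts F := by
  induction F with
  | lit a => exact fun ts => M.Jatom ts a
  | conj F G ihF ihG =>
    intro ts
    rw [gmap, M.Jpair, ihF h.1, ihG h.2, GFrame.ctxVal]
  | disj F G _ _ => exact h.elim
  | neg F _ => exact h.elim
  | obat F G ihF ihG =>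
    intro ts
    rw [gmap, M.Jseq, ihF h.1, GFrame.ctxVal, ← ihG h.2, List.append_assoc, List.singleton_append]

theorem GFrame.val_eq_ctxVal {A : Type} {c : A → A} (M : GFrame A c) {F : GGF A}
    (h : Expanded F) : M.val F = M.ctxVal [] F := by
  induction F with
  | lit a => rfl
  | conj F G ihF ihG => rw [GFrame.val, GFrame.ctxVal, ihF h.1, ihG h.2]
  | disj F G ihF ihG => rw [GFrame.val, GFrame.ctxVal, ihF h.1, ihG h.2]
  | neg F _ => exact h.elim
  | obat F G _ _ => exact M.J_gmap (F := GGF.obat F G) h []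

/-- Soundness of ⋗-reductions 4 and 5 in every context. -/
theorem GFrame.ctxVal_dist2 {A : Type} {c : A → A} (M : GFrame A c) (H X : GGF A)
    (ts : List (GT A)) : M.ctxVal ts (dist2 H X) = M.ctxVal ts (GGF.obat H X) := by
  induction X with
  | lit a => rfl
  | conj F G ihF ihG =>
    simp only [dist2, GFrame.ctxVal] at *
    omega
  | disj F G ihF ihG =>
    simp only [dist2, GFrame.ctxVal] at *
    omega
  | neg F _ => rfl
  | obat F G _ _ => rfl

/-- `rr2` complements the value in every context. -/
theorem GFrame.ctxVal_rr2 {A : Type} {c : A → A} (M : GFrame A c) {F : GGF A}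
    (h : Expanded F) : ∀ ts, M.ctxVal ts (rr2 c F) = 1 - M.ctxVal ts F := by
  induction F with
  | lit a => exact fun ts => M.Icompl ts a
  | conj F G ihF ihG =>
    intro ts
    have hF := ihF h.1 ts
    have hG := ihG h.2 ts
    simp only [GraphGradual.rr2, GFrame.ctxVal]
    omega
  | disj F G ihF ihG =>
    intro ts
    have hF := ihF h.1 ts
    have hG := ihG h.2 ts
    simp only [GraphGradual.rr2, GFrame.ctxVal]
    omega
  | neg F _ => exact h.elim
  | obat H T ihH ihT =>
    intro ts
    have hH := ihH h.1.expanded ts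
    have hT := ihT h.2.expanded (ts ++ [GT.ang (gmap H)])
    have hH1 := M.ctxVal_le_one H ts
    have hT1 := M.ctxVal_le_one T (ts ++ [GT.ang (gmap H)])
    simp only [GraphGradual.rr2, GFrame.ctxVal, GFrame.ctxVal_dist2]
    -- With `x`, `y` the values of head and tail: `max (1 - x) (min x (1 - y)) = 1 - min x y`.
    omega

theorem GFrame.val_rr2 {A : Type} {c : A → A} (M : GFrame A c) {F : GGF A} (h : Expanded F) :
    M.val (rr2 c F) = 1 - M.val F := by
  rw [M.val_eq_ctxVal (h.rr2 c), M.val_eq_ctxVal h, M.ctxVal_rr2 h]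

/-- Boolean algebra theorem, graph semantics: for every valuation
frame of the graph semantics, the valuation of formulas in unit graph expansion,
with ∧ as min, ∨ as max and complement given by recursiveReduce2, satisfies all
Boolean algebra laws. -/
theorem graph_boolean_algebra (A : Type) [Countable A] [Infinite A]
    (c : A → A) (hc : Function.Involutive c) (M : GFrame A c)
    (F F₁ F₂ F₃ : GGF A) (hF : UGE F) (h₁ : UGE F₁) (h₂ : UGE F₂) (h₃ : UGE F₃) :
    -- associativity
    (min (M.val F₁) (min (M.val F₂) (M.val F₃))
      = min (min (M.val F₁) (M.val F₂)) (M.val F₃)) ∧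
    (max (M.val F₁) (max (M.val F₂) (M.val F₃))
      = max (max (M.val F₁) (M.val F₂)) (M.val F₃)) ∧
    -- commutativity
    (min (M.val F₁) (M.val F₂) = min (M.val F₂) (M.val F₁)) ∧
    (max (M.val F₁) (M.val F₂) = max (M.val F₂) (M.val F₁)) ∧
    -- distributivity
    (min (M.val F₁) (max (M.val F₂) (M.val F₃))
      = max (min (M.val F₁) (M.val F₂)) (min (M.val F₁) (M.val F₃))) ∧
    (max (M.val F₁) (min (M.val F₂) (M.val F₃))
      = min (max (M.val F₁) (M.val F₂)) (max (M.val F₁) (M.val F₃))) ∧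
    -- idempotence
    (M.val (GGF.conj F F) = M.val F) ∧
    (M.val (GGF.disj F F) = M.val F) ∧
    -- absorption
    (M.val (GGF.conj F₁ (GGF.disj F₁ F₂)) = M.val F₁) ∧
    (M.val (GGF.disj F₁ (GGF.conj F₁ F₂)) = M.val F₁) ∧
    -- complementation
    (max (M.val F) (M.val (rr2 c F)) = 1) ∧
    (min (M.val F) (M.val (rr2 c F)) = 0) ∧
    -- double negation
    (M.val (rr2 c (rr2 c F)) = M.val F) := by
  have hE := hF.expanded
  have hle : M.val F ≤ 1 := M.val_eq_ctxVal hE ▸ M.ctxVal_le_one F []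
  have hneg := M.val_rr2 hE
  have hnegneg := M.val_rr2 (hE.rr2 c)
  refine ⟨?_, ?_, ?_, ?_, ?_, ?_, ?_, ?_, ?_, ?_, ?_, ?_, ?_⟩ <;>
    first | omega | (simp only [GFrame.val]; omega)

end GraphGradual
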